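/- For all real numbers L₁ and L₂: ∫₀^∞ ∫₀^∞ x y H(x+y, L₁) dx dy + ∫₀^∞ x·(H(x, L₁+L₂) + H(x, L₁−L₂))·(x² + 4π²)/48 dx = 5L₁⁴/96 + L₁²L₂²/16 + L₂⁴/96 + π²L₁²/2 + π²L₂²/6 + π⁴/2. (This is the instance of Mirzakhani's recursion computing 2·∂/∂L₁ (L₁·V_{1,2}(L₁, L₂)) from V_{0,3} = 1 and V_{1,1}(x) = (x² + 4π²)/48.) -/

import Mathlib

open Real MeasureTheory

/-- Mirzakhani's kernel H(x, y). -/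
noncomputable def H (x y : ℝ) : ℝ :=
  1 / (1 + Real.exp ((x + y) / 2)) + 1 / (1 + Real.exp ((x - y) / 2))

/-!
Along the lines `x + y = z` the weight `x ^ a * y ^ b` integrates to a Beta value, so the double
integral is a multiple of the third moment of `H · L₁`, and the theorem only involves odd moments
of the kernel. Since `H x t = g (x + t) + g (x - t)` with `g x = sigmoid (-(x / 2))` and
`g (-x) = 1 - g x`, moving the shifts by `± t` from `g` to the odd weight `x ^ (2 * k + 1)` leaves
only the elementary integral of that weight over `0..t`. By the binomial theorem the moment is a
polynomial in `t` whose coefficients are Fermi–Dirac integrals, i.e. values of the Dirichlet eta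
function at even integers.
-/

open Set Filter Asymptotics Finset.Nat
open Finset.HasAntidiagonal (antidiagonal)
open scoped Nat

theorem measurableSet_fst_mem_Ioo_snd (a : ℝ) : MeasurableSet {p : ℝ × ℝ | p.1 ∈ Ioo a p.2} :=
  (measurableSet_lt measurable_const measurable_fst).inter
    (measurableSet_lt measurable_fst measurable_snd)

section Shear

variable {E : Type*} [NormedAddCommGroup E]

theorem integrableOn_Ioi_comp_add_right_iff {f : ℝ → E} {a c : ℝ} :
    IntegrableOn (fun x => f (x + c)) (Ioi a) ↔ IntegrableOn f (Ioi (a + c)) := by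
  simpa [Function.comp_def] using (measurePreserving_add_right volume c).integrableOn_comp_preimage
    (measurableEmbedding_addRight c) (f := f) (s := Ioi (a + c))

variable [NormedSpace ℝ E]

theorem setIntegral_Ioi_comp_add_right (f : ℝ → E) (a c : ℝ) :
    ∫ x in Ioi a, f (x + c) = ∫ x in Ioi (a + c), f x := by
  simpa using (measurePreserving_add_right volume c).setIntegral_preimage_emb
    (measurableEmbedding_addRight c) f (Ioi (a + c))

theorem integral_Ioi_integral_Ioi_swap {f : ℝ → ℝ → E} {a : ℝ}
    (hf : IntegrableOn (Function.uncurry f) {p | p.1 ∈ Ioo a p.2}) :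
    ∫ x in Ioi a, ∫ z in Ioi x, f x z = ∫ z in Ioi a, ∫ x in a..z, f x z := by
  have hT := measurableSet_fst_mem_Ioo_snd a
  have hswap := integral_integral_swap
    (f := fun x z => {p : ℝ × ℝ | p.1 ∈ Ioo a p.2}.indicator (Function.uncurry f) (x, z))
    (μ := volume) (ν := volume) ((integrable_indicator_iff hT).2 hf)
  calc ∫ x in Ioi a, ∫ z in Ioi x, f x z
    _ = ∫ x, ∫ z, {p : ℝ × ℝ | p.1 ∈ Ioo a p.2}.indicator (Function.uncurry f) (x, z) := by
      rw [← integral_indicator measurableSet_Ioi]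
      congr with x
      by_cases hx : a < x <;>
        simp [indicator, hx, ← integral_indicator measurableSet_Ioi]
    _ = ∫ z in Ioi a, ∫ x in a..z, f x z := by
      rw [hswap, ← integral_indicator measurableSet_Ioi]
      congr with z
      rw [show (fun x => {p : ℝ × ℝ | p.1 ∈ Ioo a p.2}.indicator (Function.uncurry f) (x, z)) =
        (Ioo a z).indicator (fun x => f x z) from rfl, integral_indicator measurableSet_Ioo]
      by_cases hz : a < z
      · rw [indicator_of_mem (mem_Ioi.2 hz), intervalIntegral.integral_of_le hz.le,
          integral_Ioc_eq_integral_Ioo]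
      · simp [hz]

theorem integral_Ioi_integral_Ioi_eq_integral_intervalIntegral {f : ℝ → ℝ → E}
    (hf : IntegrableOn (fun p => f p.1 (p.2 - p.1)) {p : ℝ × ℝ | p.1 ∈ Ioo 0 p.2}) :
    ∫ x in Ioi 0, ∫ y in Ioi 0, f x y =
      ∫ z in Ioi 0, ∫ x in 0..z, f x (z - x) := by
  rw [← integral_Ioi_integral_Ioi_swap (f := fun x z => f x (z - x)) hf]
  congr with x
  simpa using setIntegral_Ioi_comp_add_right (fun z => f x (z - x)) 0 x

end Shear

theorem integral_pow_mul_one_sub_pow (a b : ℕ) :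
    ∫ x : ℝ in 0..1, x ^ a * (1 - x) ^ b = a ! * b ! / (a + b + 1)! := by
  have hbeta := Complex.Gamma_mul_Gamma_eq_betaIntegral (s := (a + 1 : ℂ)) (t := (b + 1 : ℂ))
    (by simp only [Complex.add_re, Complex.natCast_re, Complex.one_re]; positivity)
    (by simp only [Complex.add_re, Complex.natCast_re, Complex.one_re]; positivity)
  rw [show (a + 1 + (b + 1) : ℂ) = (a + b + 1 : ℕ) + 1 by push_cast; ring] at hbeta
  simp only [Complex.Gamma_nat_eq_factorial, Complex.betaIntegral, add_sub_cancel_right,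
    Complex.cpow_natCast] at hbeta
  have hfact : ((a + b + 1)! : ℂ) ≠ 0 := by exact_mod_cast Nat.factorial_ne_zero _
  rw [← Complex.ofReal_inj, ← intervalIntegral.integral_ofReal]
  push_cast
  rw [hbeta, mul_div_cancel_left₀ _ hfact]

theorem integral_pow_mul_sub_pow (a b : ℕ) (z : ℝ) :
    ∫ x in 0..z, x ^ a * (z - x) ^ b = a ! * b ! / (a + b + 1)! * z ^ (a + b + 1) := by
  have hscale := intervalIntegral.mul_integral_comp_mul_left (a := 0) (b := 1)
    (f := fun x => x ^ a * (z - x) ^ b) z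
  have hfactor : ∀ x : ℝ,
      (z * x) ^ a * (z - z * x) ^ b = z ^ (a + b) * (x ^ a * (1 - x) ^ b) := fun x => by
    rw [← mul_one_sub, mul_pow, mul_pow]; ring
  simp only [hfactor, mul_zero, mul_one, intervalIntegral.integral_const_mul,
    integral_pow_mul_one_sub_pow] at hscale
  rw [← hscale]
  ring

theorem aestronglyMeasurable_of_pow_mul {n : ℕ} {h : ℝ → ℝ}
    (hh : AEStronglyMeasurable (fun z => z ^ n * h z) (volume.restrict (Ioi 0))) :
    AEStronglyMeasurable h (volume.restrict (Ioi 0)) := by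
  have hinv : Measurable fun z : ℝ => (z ^ n)⁻¹ := by fun_prop
  refine (hinv.aestronglyMeasurable.mul hh).congr ?_
  filter_upwards [ae_restrict_mem measurableSet_Ioi] with z hz
  exact inv_mul_cancel_left₀ (pow_ne_zero n (ne_of_gt hz)) _

theorem setIntegral_Ioo_norm_pow_mul_sub_pow_mul (a b : ℕ) {z : ℝ} (hz : 0 < z) (c : ℝ) :
    ∫ x in Ioo 0 z, ‖x ^ a * (z - x) ^ b * c‖ =
      a ! * b ! / (a + b + 1)! * ‖z ^ (a + b + 1) * c‖ := by
  rw [norm_mul, norm_of_nonneg (by positivity), ← mul_assoc, ← integral_pow_mul_sub_pow,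
    ← intervalIntegral.integral_mul_const, intervalIntegral.integral_of_le hz.le,
    integral_Ioc_eq_integral_Ioo]
  refine setIntegral_congr_fun measurableSet_Ioo fun x hx => ?_
  have hweight : 0 ≤ x ^ a * (z - x) ^ b :=
    mul_nonneg (pow_nonneg hx.1.le a) (pow_nonneg (sub_nonneg.2 hx.2.le) b)
  rw [norm_mul, norm_of_nonneg hweight]

theorem integrableOn_pow_mul_sub_pow_mul {a b : ℕ} {h : ℝ → ℝ}
    (hh : IntegrableOn (fun z => z ^ (a + b + 1) * h z) (Ioi 0)) :
    IntegrableOn (fun p => p.1 ^ a * (p.2 - p.1) ^ b * h p.2) {p : ℝ × ℝ | p.1 ∈ Ioo 0 p.2} := by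
  have hT := measurableSet_fst_mem_Ioo_snd 0
  have hmeas : AEStronglyMeasurable (fun p : ℝ × ℝ => p.1 ^ a * (p.2 - p.1) ^ b * h p.2)
      (volume.restrict {p | p.1 ∈ Ioo 0 p.2}) := by
    have hh' := (aestronglyMeasurable_of_pow_mul hh.aestronglyMeasurable).comp_snd
      (μ := (volume : Measure ℝ).restrict univ)
    rw [Measure.prod_restrict] at hh'
    have hsub : {p : ℝ × ℝ | p.1 ∈ Ioo 0 p.2} ⊆ univ ×ˢ Ioi 0 :=
      fun p hp => ⟨trivial, hp.1.trans hp.2⟩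
    exact (Continuous.aestronglyMeasurable (by fun_prop)).mul (hh'.mono_set hsub)
  rw [← integrable_indicator_iff hT, Measure.volume_eq_prod,
    integrable_prod_iff' ((aestronglyMeasurable_indicator_iff hT).2 hmeas)]
  constructor
  · refine ae_of_all _ fun z => IntegrableOn.integrable_indicator ?_ measurableSet_Ioo
    have hcont : Continuous fun x => x ^ a * (z - x) ^ b * h z := by fun_prop
    exact hcont.integrableOn_Icc.mono_set Ioo_subset_Icc_self
  · have hnorm : IntegrableOn (fun z => a ! * b ! / (a + b + 1)! * ‖z ^ (a + b + 1) * h z‖)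
        (Ioi 0) := hh.norm.const_mul _
    refine (hnorm.integrable_indicator measurableSet_Ioi).congr (ae_of_all _ fun z => ?_)
    change _ = ∫ x, ‖(Ioo 0 z).indicator (fun x => x ^ a * (z - x) ^ b * h z) x‖
    simp only [norm_indicator_eq_indicator_norm]
    rw [integral_indicator measurableSet_Ioo]
    by_cases hz : 0 < z
    · rw [indicator_of_mem (mem_Ioi.2 hz), setIntegral_Ioo_norm_pow_mul_sub_pow_mul a b hz]
    · simp [hz]

theorem integral_Ioi_integral_Ioi_pow_mul_pow_mul_comp_add {a b : ℕ} {h : ℝ → ℝ}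
    (hh : IntegrableOn (fun z => z ^ (a + b + 1) * h z) (Ioi 0)) :
    ∫ x in Ioi 0, ∫ y in Ioi 0, x ^ a * y ^ b * h (x + y) =
      a ! * b ! / (a + b + 1)! * ∫ z in Ioi 0, z ^ (a + b + 1) * h z := by
  have hshear := integral_Ioi_integral_Ioi_eq_integral_intervalIntegral
    (f := fun x y => x ^ a * y ^ b * h (x + y))
  simp only [add_sub_cancel] at hshear
  rw [hshear (integrableOn_pow_mul_sub_pow_mul hh), ← integral_const_mul]
  refine setIntegral_congr_fun measurableSet_Ioi fun z _ => ?_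
  rw [intervalIntegral.integral_mul_const, integral_pow_mul_sub_pow, mul_assoc]

section Reflection

variable {p g : ℝ → ℝ}

theorem setIntegral_Ioi_mul_comp_add
    {t : ℝ} (hint : ∀ a, IntegrableOn (fun x => p (x - t) * g x) (Ioi a)) :
    ∫ x in Ioi 0, p x * g (x + t) =
      (∫ x in Ioi 0, p (x - t) * g x) - ∫ x in 0..t, p (x - t) * g x := by
  have hshift := setIntegral_Ioi_comp_add_right (fun x => p (x - t) * g x) 0 t
  simp only [add_sub_cancel_right, zero_add] at hshift
  rw [hshift, eq_sub_iff_add_eq']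
  exact intervalIntegral.integral_interval_add_Ioi (hint 0) (hint t)

theorem integral_neg_zero_odd_mul (hp : p.Odd) (hpc : Continuous p) (hg : ∀ x, g (-x) = 1 - g x)
    (hint : ∀ c a, IntegrableOn (fun x => p (x + c) * g x) (Ioi a)) (t : ℝ) :
    ∫ x in (-t)..0, p (x + t) * g x =
      (∫ x in 0..t, p x) + ∫ x in 0..t, p (x - t) * g x := by
  have hpt : ∀ x, p (-x + t) * g (-x) = p (t - x) + p (x - t) * g x := fun x => by
    rw [hg, ← neg_sub t x, hp (t - x)]; ring_nf
  have hrefl := intervalIntegral.integral_comp_neg (a := 0) (b := t) fun x => p (x + t) * g x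
  have hsub := intervalIntegral.integral_comp_sub_left (a := 0) (b := t) p t
  simp only [sub_self, sub_zero, neg_zero] at hrefl hsub
  rw [← hrefl, ← hsub, ← intervalIntegral.integral_add]
  · simp only [hpt]
  · exact Continuous.intervalIntegrable (by fun_prop) _ _
  · exact intervalIntegrable_iff.2 ((hint (-t) _).mono_set Ioc_subset_Ioi_self)

theorem setIntegral_Ioi_odd_mul_add (hp : p.Odd) (hpc : Continuous p) (hg : ∀ x, g (-x) = 1 - g x)
    (hint : ∀ c a, IntegrableOn (fun x => p (x + c) * g x) (Ioi a)) (t : ℝ) :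
    ∫ x in Ioi 0, p x * (g (x + t) + g (x - t)) =
      (∫ x in 0..t, p x) + ∫ x in Ioi 0, (p (x + t) + p (x - t)) * g x := by
  have hgint : ∀ t, IntegrableOn (fun x => p x * g (x + t)) (Ioi 0) := fun t => by
    simpa using (integrableOn_Ioi_comp_add_right_iff (a := 0) (c := t)).2 (hint (-t) _)
  have hneg : ∫ x in 0..(-t), p (x + t) * g x = -∫ x in (-t)..0, p (x + t) * g x :=
    intervalIntegral.integral_symm _ _
  have hplus := setIntegral_Ioi_mul_comp_add (hint (-t))
  have hminus := setIntegral_Ioi_mul_comp_add (t := -t)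
    (by simpa only [sub_neg_eq_add] using hint t)
  simp only [sub_neg_eq_add, ← sub_eq_add_neg] at hminus
  have hsumg := integral_add (hgint t) (hgint (-t))
  have hsump := integral_add (hint t 0) (hint (-t) 0)
  simp only [← sub_eq_add_neg] at hsumg hsump
  simp only [mul_add, add_mul]
  rw [hsumg, hsump, hplus, hminus, hneg, integral_neg_zero_odd_mul hp hpc hg hint]
  ring

end Reflection

theorem add_pow_add_sub_pow_odd {K : Type*} [Field K] [CharZero K] (x t : K) (k : ℕ) :
    (x + t) ^ (2 * k + 1) + (x - t) ^ (2 * k + 1) =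
      2 * (2 * k + 1)! * ∑ p ∈ antidiagonal k,
        x ^ (2 * p.1 + 1) / (2 * p.1 + 1)! * (t ^ (2 * p.2) / (2 * p.2)!) := by
  rw [sub_eq_add_neg, (Commute.all _ _).add_pow', (Commute.all _ _).add_pow',
    ← Finset.sum_add_distrib, Finset.mul_sum]
  refine (Finset.sum_of_injOn (fun p => (2 * p.1 + 1, 2 * p.2)) ?_ ?_ ?_ ?_).symm
  · rintro p - q - hpq
    simp only [Prod.mk.injEq] at hpq
    ext <;> lia
  · intro p hp
    simp only [Finset.mem_coe, Finset.HasAntidiagonal.mem_antidiagonal] at hp ⊢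
    lia
  · rintro ⟨i, j⟩ hij hnot
    rw [Finset.HasAntidiagonal.mem_antidiagonal] at hij
    have hj : Odd j := by
      by_contra hj
      obtain ⟨l, rfl⟩ := even_iff_two_dvd.1 (Nat.not_odd_iff_even.1 hj)
      refine hnot ⟨(k - l, l), ?_, ?_⟩
      · simp only [Finset.mem_coe, Finset.HasAntidiagonal.mem_antidiagonal]
        lia
      · simp only [Prod.mk.injEq]
        lia
    simp [hj.neg_pow]
  · rintro ⟨i, j⟩ hij
    rw [Finset.HasAntidiagonal.mem_antidiagonal] at hij
    have hchoose : ((2 * k + 1).choose (2 * i + 1) : K) =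
        (2 * k + 1)! / ((2 * i + 1)! * (2 * j)!) := by
      rw [Nat.cast_choose K (by lia)]; congr; lia
    simp only [nsmul_eq_mul, hchoose, (even_two_mul j).neg_pow]
    ring

theorem hasSum_neg_one_pow_div_add_one_cpow {s : ℂ} (hs : 1 < s.re) :
    HasSum (fun n : ℕ => (-1) ^ n / (n + 1 : ℂ) ^ s) ((1 - 2 ^ (1 - s)) * riemannZeta s) := by
  have hsum : Summable fun n : ℕ => 1 / (n + 1 : ℂ) ^ s := by
    simpa using (summable_nat_add_iff 1).2 (Complex.summable_one_div_nat_cpow.2 hs)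
  have hzeta : HasSum (fun n : ℕ => 1 / (n + 1 : ℂ) ^ s) (riemannZeta s) :=
    zeta_eq_tsum_one_div_nat_add_one_cpow hs ▸ hsum.hasSum
  have hodd : HasSum (fun n : ℕ => 1 / ((2 * n + 1 : ℕ) + 1 : ℂ) ^ s)
      (2 ^ (-s) * riemannZeta s) := by
    refine (hzeta.mul_left (2 ^ (-s))).congr_fun fun n => ?_
    have hmul := Complex.natCast_mul_natCast_cpow 2 (n + 1) s
    push_cast at hmul ⊢
    rw [show (2 * n + 1 + 1 : ℂ) = 2 * (n + 1) by ring, hmul, Complex.cpow_neg, ← one_div,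
      one_div_mul_one_div]
  have heven : HasSum (fun n : ℕ => 1 / ((2 * n : ℕ) + 1 : ℂ) ^ s)
      (riemannZeta s - 2 ^ (-s) * riemannZeta s) := by
    have hsum_even : Summable fun n : ℕ => 1 / ((2 * n : ℕ) + 1 : ℂ) ^ s :=
      hsum.comp_injective (i := (2 * ·)) (mul_right_injective₀ two_ne_zero)
    have htotal := (HasSum.even_add_odd (f := fun n : ℕ => 1 / (n + 1 : ℂ) ^ s)
      hsum_even.hasSum hodd).unique hzeta
    exact eq_sub_of_add_eq htotal ▸ hsum_even.hasSum
  have hvalue : (1 - 2 ^ (1 - s)) * riemannZeta s =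
      riemannZeta s - 2 ^ (-s) * riemannZeta s + -(2 ^ (-s) * riemannZeta s) := by
    rw [sub_eq_add_neg 1 s, Complex.cpow_add _ _ two_ne_zero, Complex.cpow_one]
    ring
  rw [hvalue]
  refine HasSum.even_add_odd (heven.congr_fun fun n => ?_) (hodd.neg.congr_fun fun n => ?_)
  · simp
  · simp [pow_succ, neg_div]

theorem hasSum_neg_one_pow_mul_exp_neg {t : ℝ} (ht : 0 < t) :
    HasSum (fun n : ℕ => (-1) ^ n * rexp (-(n + 1) * t)) (sigmoid (-t)) := by
  have hgeom := (hasSum_geometric_of_abs_lt_one (r := -rexp (-t)) (by simpa)).mul_left (rexp (-t))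
  have hvalue : sigmoid (-t) = rexp (-t) * (1 - -rexp (-t))⁻¹ := by
    rw [← sigmoid_mul_rexp_neg, sigmoid_def, sub_neg_eq_add, mul_comm]
  rw [hvalue]
  refine hgeom.congr_fun fun n => ?_
  rw [neg_pow (rexp (-t)), ← exp_nat_mul, mul_left_comm, ← exp_add]
  ring_nf

theorem mellin_sigmoid_neg {s : ℂ} (hs : 1 < s.re) :
    mellin (fun t => (sigmoid (-t) : ℂ)) s =
      Complex.Gamma s * ((1 - 2 ^ (1 - s)) * riemannZeta s) := by
  have hexp : ∀ t ∈ Ioi (0 : ℝ), HasSum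
      (fun n : ℕ => (-1 : ℂ) ^ n * rexp (-(n + 1 : ℝ) * t)) (sigmoid (-t) : ℂ) := fun t ht => by
    exact_mod_cast Complex.hasSum_ofReal.2 (hasSum_neg_one_pow_mul_exp_neg ht)
  have hsum : Summable fun n : ℕ => ‖(-1 : ℂ) ^ n‖ / (n + 1 : ℝ) ^ s.re := by
    simpa using (summable_nat_add_iff 1).2 (Real.summable_one_div_nat_rpow.2 hs)
  have hmellin := hasSum_mellin (fun n => Or.inr (by positivity)) (by linarith) hexp hsum
  have heta := (hasSum_neg_one_pow_div_add_one_cpow hs).mul_left (Complex.Gamma s)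
  refine hmellin.unique (heta.congr_fun fun n => ?_)
  push_cast
  rw [mul_div_assoc]

theorem integral_pow_mul_sigmoid_neg_half {k : ℕ} (hk : k ≠ 0) :
    ((∫ x in Ioi 0, x ^ k * sigmoid (-(x / 2)) : ℝ) : ℂ) =
      k ! * (2 ^ (k + 1) - 2) * riemannZeta (k + 1) := by
  have hmellin := mellin_sigmoid_neg (s := k + 1) (by simpa using Nat.pos_of_ne_zero hk)
  have hscale := mellin_comp_mul_left (fun t => (sigmoid (-t) : ℂ)) (k + 1) (half_pos one_pos)
  rw [hmellin, Complex.Gamma_nat_eq_factorial] at hscale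
  have hreal : mellin (fun x => (sigmoid (-(1 / 2 * x)) : ℂ)) (k + 1) =
      ((∫ x in Ioi 0, x ^ k * sigmoid (-(x / 2)) : ℝ) : ℂ) := by
    rw [mellin, ← integral_complex_ofReal]
    simp [Complex.cpow_natCast, div_eq_inv_mul]
  have hpow : ((1 / 2 : ℝ) : ℂ) ^ (-(k + 1 : ℂ)) = 2 ^ (k + 1) := by
    have hinv := Complex.cpow_natCast (1 / 2) (k + 1)
    push_cast at hinv ⊢
    rw [Complex.cpow_neg, hinv, one_div, inv_pow, inv_inv]
  have heta : (2 : ℂ) ^ (k + 1) * (1 - 2 ^ (1 - (k + 1 : ℂ))) = 2 ^ (k + 1) - 2 := by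
    rw [show 1 - (k + 1 : ℂ) = -k by ring, Complex.cpow_neg, Complex.cpow_natCast]
    field_simp
    ring
  rw [← hreal, hscale, hpow, smul_eq_mul, ← heta]
  ring

theorem H_eq_sigmoid_add_sigmoid (x t : ℝ) :
    H x t = sigmoid (-((x + t) / 2)) + sigmoid (-((x - t) / 2)) := by
  simp only [H, sigmoid_def, neg_neg, one_div]

theorem sigmoid_le_exp (x : ℝ) : sigmoid x ≤ rexp x := by
  calc sigmoid x
    _ = sigmoid (-x) * rexp x := by simpa using (sigmoid_mul_rexp_neg (-x)).symm
    _ ≤ rexp x := mul_le_of_le_one_left (exp_pos x).le (sigmoid_le_one _)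

theorem integrableOn_add_pow_mul_sigmoid_neg_half (n : ℕ) (c a : ℝ) :
    IntegrableOn (fun x => (x + c) ^ n * sigmoid (-(x / 2))) (Ioi a) := by
  have hpow : (fun x : ℝ => (x + c) ^ n) =O[atTop] fun x => rexp (1 / 4 * x) := by
    have hlin : (fun x : ℝ => x + c) =O[atTop] fun x => x :=
      (isBigO_refl _ _).add (isLittleO_const_id_atTop c).isBigO
    exact (hlin.pow n).trans (isLittleO_pow_exp_pos_mul_atTop n (by norm_num)).isBigO
  have hsigmoid : (fun x => sigmoid (-(x / 2))) =O[atTop] fun x => rexp (-(x / 2)) :=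
    IsBigO.of_bound' <| Eventually.of_forall fun x => by
      rw [norm_of_nonneg (sigmoid_nonneg _), norm_of_nonneg (exp_pos _).le]
      exact sigmoid_le_exp _
  refine integrable_of_isBigO_exp_neg (b := 1 / 4) (by norm_num) (by fun_prop) ?_
  refine (hpow.mul hsigmoid).congr_right fun x => ?_
  rw [← exp_add]
  ring_nf

theorem integrableOn_pow_mul_H (n : ℕ) (t : ℝ) :
    IntegrableOn (fun x => x ^ n * H x t) (Ioi 0) := by
  have hshift : ∀ t, IntegrableOn (fun x => x ^ n * sigmoid (-((x + t) / 2))) (Ioi 0) := fun t => by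
    simpa using (integrableOn_Ioi_comp_add_right_iff (a := 0) (c := t)).2
      (integrableOn_add_pow_mul_sigmoid_neg_half n (-t) _)
  simpa only [H_eq_sigmoid_add_sigmoid, mul_add, sub_eq_add_neg] using! (hshift t).add (hshift (-t))

theorem integral_odd_pow_mul_H_eq_add_sum (k : ℕ) (t : ℝ) :
    ∫ x in Ioi 0, x ^ (2 * k + 1) * H x t =
      t ^ (2 * k + 2) / (2 * k + 2) + 2 * (2 * k + 1)! * ∑ p ∈ antidiagonal k,
        (∫ x in Ioi 0, x ^ (2 * p.1 + 1) * sigmoid (-(x / 2))) / (2 * p.1 + 1)! *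
          (t ^ (2 * p.2) / (2 * p.2)!) := by
  have hreflect := setIntegral_Ioi_odd_mul_add (p := (· ^ (2 * k + 1)))
    (g := fun x => sigmoid (-(x / 2))) (fun x => (odd_two_mul_add_one k).neg_pow x) (by fun_prop)
    (fun x => by rw [neg_div, sigmoid_neg]) (integrableOn_add_pow_mul_sigmoid_neg_half _) t
  simp only [← H_eq_sigmoid_add_sigmoid, integral_pow] at hreflect
  have hint : ∀ n, IntegrableOn (fun x => x ^ n * sigmoid (-(x / 2))) (Ioi 0) := fun n => by
    simpa using integrableOn_add_pow_mul_sigmoid_neg_half n 0 0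
  rw [hreflect]
  congr 1
  · push_cast; ring
  have hsummand : ∀ i j x, x ^ (2 * i + 1) / (2 * i + 1)! * (t ^ (2 * j) / (2 * j)!) *
      sigmoid (-(x / 2)) = t ^ (2 * j) / (2 * j)! / (2 * i + 1)! *
        (x ^ (2 * i + 1) * sigmoid (-(x / 2))) := fun i j x => by ring
  simp only [add_pow_add_sub_pow_odd, mul_assoc (2 * _ : ℝ), Finset.sum_mul, hsummand,
    integral_const_mul]
  rw [integral_finsetSum _ fun p _ => (hint _).const_mul _]
  simp only [integral_const_mul]
  congr! 2
  ring

/-- Mirzakhani's polynomials `F_{2k+1}(t)`; as `ζ 0 = -1 / 2`, their leading term is `p.1 = 0`. -/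
theorem integral_odd_pow_mul_H (k : ℕ) (t : ℝ) :
    ((∫ x in Ioi 0, x ^ (2 * k + 1) * H x t : ℝ) : ℂ) =
      (2 * k + 1)! * ∑ p ∈ antidiagonal (k + 1),
        riemannZeta (2 * p.1) * (2 ^ (2 * p.1 + 1) - 4) * (t ^ (2 * p.2) / (2 * p.2)!) := by
  have hfermi : ∀ i : ℕ, ((∫ x in Ioi 0, x ^ (2 * i + 1) * sigmoid (-(x / 2)) : ℝ) : ℂ) /
      (2 * i + 1)! = (2 ^ (2 * i + 2) - 2) * riemannZeta (2 * (i + 1)) := fun i => by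
    rw [integral_pow_mul_sigmoid_neg_half (Nat.succ_ne_zero _)]
    have hfact : ((2 * i + 1)! : ℂ) ≠ 0 := by exact_mod_cast Nat.factorial_ne_zero _
    rw [mul_assoc, mul_div_cancel_left₀ _ hfact]
    congr 2
    push_cast
    ring
  rw [integral_odd_pow_mul_H_eq_add_sum, sum_antidiagonal_succ]
  push_cast
  have hfact : ((2 * (k + 1))! : ℂ) = (2 * k + 2) * (2 * k + 1)! := by
    exact_mod_cast Nat.factorial_succ (2 * k + 1)
  have hfact_ne : ((2 * k + 1)! : ℂ) ≠ 0 := by exact_mod_cast Nat.factorial_ne_zero _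
  simp only [hfermi, mul_zero, riemannZeta_zero, hfact]
  rw [mul_add, mul_comm 2 ((2 * k + 1)! : ℂ), mul_assoc _ (2 : ℂ), Finset.mul_sum]
  congr 1
  · field_simp
    ring
  · congr! 2
    ring

theorem integral_mul_H (t : ℝ) : ∫ x in Ioi 0, x * H x t = t ^ 2 / 2 + 2 * π ^ 2 / 3 := by
  rw [← Complex.ofReal_inj]
  convert integral_odd_pow_mul_H 0 t using 1
  · simp
  · norm_num [sum_antidiagonal_succ, riemannZeta_zero, riemannZeta_two]
    ring

theorem integral_pow_three_mul_H (t : ℝ) :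
    ∫ x in Ioi 0, x ^ 3 * H x t = t ^ 4 / 4 + 2 * π ^ 2 * t ^ 2 + 28 * π ^ 4 / 15 := by
  rw [← Complex.ofReal_inj, integral_odd_pow_mul_H 1 t]
  norm_num [sum_antidiagonal_succ, riemannZeta_zero, riemannZeta_two, riemannZeta_four,
    Nat.factorial]
  ring

theorem integral_integral_mul_mul_H_add (t : ℝ) :
    ∫ x in Ioi 0, ∫ y in Ioi 0, x * y * H (x + y) t = (∫ z in Ioi 0, z ^ 3 * H z t) / 6 := by
  have hshear := integral_Ioi_integral_Ioi_pow_mul_pow_mul_comp_add (a := 1) (b := 1)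
    (integrableOn_pow_mul_H 3 t)
  simp only [pow_one, Nat.reduceAdd, Nat.factorial_one] at hshear
  rw [hshear]
  norm_num [Nat.factorial]
  ring

theorem integrableOn_mul_H (t : ℝ) : IntegrableOn (fun x => x * H x t) (Ioi 0) := by
  simpa only [pow_one] using integrableOn_pow_mul_H 1 t

theorem mul_H_mul_sq_add (c t x : ℝ) :
    x * H x t * (x ^ 2 + c) = x ^ 3 * H x t + c * (x * H x t) := by
  ring

theorem integrableOn_mul_H_mul_sq_add (c t : ℝ) :
    IntegrableOn (fun x => x * H x t * (x ^ 2 + c)) (Ioi 0) := by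
  simp only [mul_H_mul_sq_add]
  exact (integrableOn_pow_mul_H 3 t).add ((integrableOn_mul_H t).const_mul c)

theorem integral_mul_H_mul_sq_add (c t : ℝ) :
    ∫ x in Ioi 0, x * H x t * (x ^ 2 + c) =
      (∫ x in Ioi 0, x ^ 3 * H x t) + c * ∫ x in Ioi 0, x * H x t := by
  simp only [mul_H_mul_sq_add]
  rw [integral_add (integrableOn_pow_mul_H 3 t) ((integrableOn_mul_H t).const_mul c),
    integral_const_mul]

theorem mirzakhani_recursion_V12 (L₁ L₂ : ℝ) :
    (∫ x in Set.Ioi (0 : ℝ), ∫ y in Set.Ioi (0 : ℝ), x * y * H (x + y) L₁) +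
      ∫ x in Set.Ioi (0 : ℝ),
        x * (H x (L₁ + L₂) + H x (L₁ - L₂)) * (x ^ 2 + 4 * π ^ 2) / 48 =
    5 * L₁ ^ 4 / 96 + L₁ ^ 2 * L₂ ^ 2 / 16 + L₂ ^ 4 / 96 +
      π ^ 2 * L₁ ^ 2 / 2 + π ^ 2 * L₂ ^ 2 / 6 + π ^ 4 / 2 := by
  have hsplit : ∀ x, x * (H x (L₁ + L₂) + H x (L₁ - L₂)) * (x ^ 2 + 4 * π ^ 2) =
      x * H x (L₁ + L₂) * (x ^ 2 + 4 * π ^ 2) + x * H x (L₁ - L₂) * (x ^ 2 + 4 * π ^ 2) :=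
    fun x => by ring
  simp only [integral_div, hsplit]
  rw [integral_integral_mul_mul_H_add,
    integral_add (integrableOn_mul_H_mul_sq_add _ _) (integrableOn_mul_H_mul_sq_add _ _)]
  simp only [integral_mul_H_mul_sq_add, integral_mul_H, integral_pow_three_mul_H]
  ring
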